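/- arXiv:2006.12374 — 2 statements merged into one kernel-verified Lean document; each statement's English description precedes it below -/
import Mathlib

section
/- Fix n ≥ 1. For every pair (R, S) of real symmetric positive definite n×n matrices there is a unique real n×n matrix s(R, S) all of whose complex eigenvalues are positive real numbers and which satisfies s(R, S)² = R⁻¹ · S; moreover R · s(R, S) is a symmetric matrix, and the assignment (R, S) ↦ s(R, S) is infinitely differentiable (C^∞) on the set of pairs of symmetric positive definite matrices, regarded as a subset of the real vector space of pairs of n×n real matrices. -/
/-!
The whole argument rests on Sylvester's lemma: if `s` and `t` are real matrices whose complex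
eigenvalues are all positive, then `s * X + X * t = 0` forces `X = 0` (`sylvester`).

*Uniqueness* (`sqrt_unique`). If `s * s = t * t` then `s * (s - t) + (s - t) * t = 0`.

*Symmetry* (`twist_eq`, `symm_of_twist`). If `s * s = R⁻¹ * S`, then `R⁻¹ * sᵀ * R` is another
square root of `R⁻¹ * S` with the same characteristic polynomial, so it equals `s`; this says
exactly that `R * s` is symmetric.

*Existence* (`exists_sqrt`). With `Q` the positive definite square root of `R` and `T` that of
`Q⁻¹ * S * Q⁻¹`, take `s = R⁻¹ * P` where `P = Q * T * Q` is positive definite. Such a product is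
similar to a positive definite matrix (`hasPosEig_inv_mul`), so its eigenvalues are positive.

*Smoothness* (`contDiffWithinAt`). The polynomial map `(R, s) ↦ (R, R * s²)` on pairs of arbitrary
real matrices has an invertible derivative at `(R₀, s₀)`, again by Sylvester's lemma, so it has a
smooth local inverse `(R, S) ↦ (R, t)` near `(R₀, S₀)`. It remains to see that `t = s(R, S)` for
positive definite `R` and `S`. Both `(R, t)` and `(R, R⁻¹ * tᵀ * R)` lie near `(R₀, s₀)` and are sent
to `(R, S)`, so local injectivity gives the symmetry of `R * t`; being close to the positive
definite matrix `R₀ * s₀`, it is positive definite (`eventually_pos`), hence `t = R⁻¹ * (R * t)` has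
positive eigenvalues and uniqueness applies.
-/

attribute [local instance] Matrix.normedAddCommGroup Matrix.normedSpace

open scoped Matrix

namespace MatrixSqrt

variable {n : ℕ}

local notation "Mat" => Matrix (Fin n) (Fin n) ℝ

/-- All complex eigenvalues of the real matrix `s` are positive real numbers. -/
def HasPosEig (s : Mat) : Prop :=
  ∀ μ : ℂ, ((s.map (algebraMap ℝ ℂ)).charpoly).IsRoot μ → ∃ r : ℝ, 0 < r ∧ μ = (r : ℂ)

theorem hasPosEig_congr {s t : Mat} (h : s.charpoly = t.charpoly) (hs : HasPosEig s) :
    HasPosEig t := by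
  unfold HasPosEig at *
  rw [Matrix.charpoly_map] at *
  rwa [← h]

theorem hasPosEig_of_posDef {P : Mat} (hP : P.PosDef) : HasPosEig P := by
  intro μ hμ
  rw [Matrix.charpoly_map, hP.1.charpoly_eq, Polynomial.map_prod, Polynomial.IsRoot.def,
    Polynomial.eval_prod, Finset.prod_eq_zero_iff] at hμ
  obtain ⟨i, -, hi⟩ := hμ
  refine ⟨hP.1.eigenvalues i, hP.eigenvalues_pos i, ?_⟩
  simpa [sub_eq_zero] using hi

open scoped MatrixOrder in
theorem exists_posDef_sqrt {A : Mat} (hA : A.PosDef) : ∃ T : Mat, T.PosDef ∧ T * T = A := by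
  have h0 : 0 ≤ A := hA.posSemidef.nonneg
  have h1 : CFC.sqrt A * CFC.sqrt A = A := CFC.sqrt_mul_sqrt_self A h0
  refine ⟨CFC.sqrt A, ?_, h1⟩
  refine ((Matrix.nonneg_iff_posSemidef.1 (CFC.sqrt_nonneg A)).posDef_iff_det_ne_zero).2 fun h => ?_
  have h2 := congrArg Matrix.det h1
  rw [Matrix.det_mul, h, zero_mul] at h2
  exact hA.det_pos.ne h2

theorem det_isUnit {R : Mat} (hR : R.PosDef) : IsUnit R.det :=
  (Matrix.isUnit_iff_isUnit_det R).1 hR.isUnit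

theorem hasPosEig_inv_mul {R P : Mat} (hR : R.PosDef) (hP : P.PosDef) : HasPosEig (R⁻¹ * P) := by
  obtain ⟨Q, hQ, hQR⟩ := exists_posDef_sqrt hR
  have hQi := hQ.inv
  have h1 : (Q⁻¹ * P * Q⁻¹).PosDef := by
    have := hP.mul_mul_conjTranspose_same (B := Q⁻¹)
      (Matrix.vecMul_injective_of_isUnit hQi.isUnit)
    rwa [hQi.1.eq] at this
  refine hasPosEig_congr ?_ (hasPosEig_of_posDef h1)
  rw [mul_assoc, Matrix.charpoly_mul_comm, ← hQR, Matrix.mul_inv_rev, Matrix.charpoly_mul_comm]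
  rw [← mul_assoc, Matrix.charpoly_mul_comm, mul_assoc]

/-- Sylvester's lemma for matrices with positive eigenvalues. Over `ℂ`, the relation
`X * (-t) = s * X` gives `X * p(-t) = p(s) * X` for every polynomial `p`. For `p` the characteristic
polynomial of `s` the right side vanishes by Cayley–Hamilton, while `p(-t)` is invertible because
no eigenvalue of `-t` is an eigenvalue of `s`. -/
theorem sylvester (hn : 1 ≤ n) {s t X : Mat} (hs : HasPosEig s) (ht : HasPosEig t)
    (h : s * X + X * t = 0) : X = 0 := by
  let φ : Mat →+* Matrix (Fin n) (Fin n) ℂ := (algebraMap ℝ ℂ).mapMatrix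
  have hφ : Function.Injective φ := fun a b hab => by
    ext i j
    have := congrFun (congrFun hab i) j
    simpa [φ] using this
  have : Nontrivial (Fin n → ℂ) := by
    have : Nonempty (Fin n) := ⟨⟨0, hn⟩⟩
    infer_instance
  set p := (φ s).charpoly with hp
  have hsc : SemiconjBy (φ X) (-(φ t)) (φ s) := by
    have h1 := congrArg φ h
    rw [map_add, map_mul, map_mul, map_zero] at h1
    have := eq_neg_of_add_eq_zero_left h1
    rw [SemiconjBy, this, mul_neg]
  have hpow : ∀ q : Polynomial ℂ,
      φ X * Polynomial.aeval (-(φ t)) q = Polynomial.aeval (φ s) q * φ X := by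
    intro q
    induction q using Polynomial.induction_on' with
    | add a b ha hb => simp only [map_add, mul_add, add_mul, ha, hb]
    | monomial k a =>
      rw [Polynomial.aeval_monomial, Polynomial.aeval_monomial, mul_assoc, ← (hsc.pow_right k).eq,
        ← mul_assoc, ← mul_assoc, Algebra.commutes]
  have hu : IsUnit (Polynomial.aeval (-(φ t)) p) := by
    rw [← spectrum.zero_notMem_iff ℂ, spectrum.map_polynomial_aeval_of_degree_pos]
    · rintro ⟨μ, hμ, hr⟩
      obtain ⟨r, hr0, rfl⟩ := hs μ hr
      rw [← spectrum.neg_eq, Set.mem_neg, Matrix.mem_spectrum_iff_isRoot_charpoly] at hμ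
      obtain ⟨r', hr0', h'⟩ := ht _ hμ
      have : -r = r' := by exact_mod_cast h'
      linarith
    · rw [Matrix.charpoly_degree_eq_dim]
      simpa using (show 0 < n from hn)
  have h0 := hpow p
  rw [hp, Matrix.aeval_self_charpoly, zero_mul, ← hp] at h0
  apply hφ
  rw [map_zero]
  exact (hu.mul_left_eq_zero).1 h0

theorem sqrt_unique (hn : 1 ≤ n) {s t : Mat} (hs : HasPosEig s) (ht : HasPosEig t)
    (h : s * s = t * t) : s = t := by
  refine sub_eq_zero.1 (sylvester hn hs ht (X := s - t) ?_)
  rw [mul_sub, sub_mul, h]; abel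

/-- The map `s ↦ R⁻¹ * sᵀ * R`, the adjoint for the bilinear form `R`, preserves the
square roots of `R⁻¹ * S`. -/
theorem twist_sq {R S s : Mat} (hR : R.PosDef) (hS : S.PosDef) (h : s * s = R⁻¹ * S) :
    (R⁻¹ * sᵀ * R) * (R⁻¹ * sᵀ * R) = R⁻¹ * S := by
  have hRt : Rᵀ = R := by simpa using hR.1.eq
  have hSt : Sᵀ = S := by simpa using hS.1.eq
  have hu := det_isUnit hR
  have h1 : sᵀ * sᵀ = S * R⁻¹ := by
    rw [← Matrix.transpose_mul, h, Matrix.transpose_mul, Matrix.transpose_nonsing_inv, hRt, hSt]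
  calc (R⁻¹ * sᵀ * R) * (R⁻¹ * sᵀ * R) = R⁻¹ * (sᵀ * ((R * R⁻¹) * sᵀ)) * R := by
        simp only [mul_assoc]
    _ = R⁻¹ * (S * (R⁻¹ * R)) := by
        rw [Matrix.mul_nonsing_inv _ hu, one_mul, h1]; simp only [mul_assoc]
    _ = R⁻¹ * S := by rw [Matrix.nonsing_inv_mul _ hu, mul_one]

theorem symm_of_twist {R s : Mat} (hR : R.PosDef) (h : R⁻¹ * sᵀ * R = s) : (R * s)ᵀ = R * s := by
  have hRt : Rᵀ = R := by simpa using hR.1.eq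
  have hu := det_isUnit hR
  conv_rhs => rw [← h]
  rw [Matrix.transpose_mul, hRt, ← mul_assoc, ← mul_assoc, Matrix.mul_nonsing_inv _ hu, one_mul]

theorem twist_eq (hn : 1 ≤ n) {R S s : Mat} (hR : R.PosDef) (hS : S.PosDef) (hs : HasPosEig s)
    (h : s * s = R⁻¹ * S) : R⁻¹ * sᵀ * R = s := by
  have hu := det_isUnit hR
  refine sqrt_unique hn (hasPosEig_congr ?_ hs) hs ((twist_sq hR hS h).trans h.symm)
  rw [mul_assoc, Matrix.charpoly_mul_comm, mul_assoc, Matrix.mul_nonsing_inv _ hu, mul_one,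
    Matrix.charpoly_transpose]

/-- `R⁻¹ * S` has a square root of the form `R⁻¹ * P` with `P` positive definite. -/
theorem exists_sqrt {R S : Mat} (hR : R.PosDef) (hS : S.PosDef) :
    ∃ P : Mat, P.PosDef ∧ (R⁻¹ * P) * (R⁻¹ * P) = R⁻¹ * S := by
  obtain ⟨Q, hQ, hQR⟩ := exists_posDef_sqrt hR
  have hQi := hQ.inv
  have hu := det_isUnit hQ
  have h1 : (Q⁻¹ * S * Q⁻¹).PosDef := by
    have := hS.mul_mul_conjTranspose_same (B := Q⁻¹)
      (Matrix.vecMul_injective_of_isUnit hQi.isUnit)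
    rwa [hQi.1.eq] at this
  obtain ⟨T, hT, hTT⟩ := exists_posDef_sqrt h1
  refine ⟨Q * T * Q, ?_, ?_⟩
  · have := hT.mul_mul_conjTranspose_same (B := Q) (Matrix.vecMul_injective_of_isUnit hQ.isUnit)
    rwa [hQ.1.eq] at this
  · rw [← hQR, Matrix.mul_inv_rev]
    have e : Q⁻¹ * Q⁻¹ * (Q * T * Q) = Q⁻¹ * T * Q := by
      simp only [mul_assoc]
      rw [Matrix.nonsing_inv_mul_cancel_left _ _ hu]
    rw [e]
    calc Q⁻¹ * T * Q * (Q⁻¹ * T * Q) = Q⁻¹ * (T * ((Q * Q⁻¹) * T)) * Q := by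
          simp only [mul_assoc]
      _ = Q⁻¹ * Q⁻¹ * S * (Q⁻¹ * Q) := by
          rw [Matrix.mul_nonsing_inv _ hu, one_mul, hTT]; simp only [mul_assoc]
      _ = Q⁻¹ * Q⁻¹ * S := by rw [Matrix.nonsing_inv_mul _ hu, mul_one]

/-- For the square root `s` of `R⁻¹ * S`, the matrix `R * s` is the geometric mean of `R` and `S`. -/
theorem posDef_mul (hn : 1 ≤ n) {R S s : Mat} (hR : R.PosDef) (hS : S.PosDef) (hs : HasPosEig s)
    (h : s * s = R⁻¹ * S) : (R * s).PosDef := by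
  obtain ⟨P, hP, hPS⟩ := exists_sqrt hR hS
  rw [sqrt_unique hn hs (hasPosEig_inv_mul hR hP) (h.trans hPS.symm),
    Matrix.mul_nonsing_inv_cancel_left _ _ (det_isUnit hR)]
  exact hP

/-- Positive definiteness is an open condition among Hermitian matrices, by compactness of the unit
sphere of `Fin n → ℝ` (in the sup norm). -/
theorem eventually_pos {M₀ : Mat} (h : M₀.PosDef) :
    ∀ᶠ M in nhds M₀, M.IsHermitian → M.PosDef := by
  have hc : Continuous fun z : Mat × (Fin n → ℝ) => z.2 ⬝ᵥ (z.1 *ᵥ z.2) := by fun_prop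
  have key : ∀ᶠ M in nhds M₀, ∀ x ∈ Metric.sphere (0 : Fin n → ℝ) 1, 0 < x ⬝ᵥ (M *ᵥ x) := by
    refine (isCompact_sphere _ _).eventually_forall_of_forall_eventually fun x hx => ?_
    refine hc.continuousAt.eventually (lt_mem_nhds ?_)
    have hx0 : x ≠ 0 := by
      rintro rfl
      simp at hx
    simpa using h.dotProduct_mulVec_pos hx0
  filter_upwards [key] with M hM hH
  refine .of_dotProduct_mulVec_pos hH fun x hx => ?_
  have hx' : 0 < ‖x‖ := norm_pos_iff.2 hx
  -- Rescale `x` to the unit sphere; the quadratic form scales by the positive factor `‖x‖⁻¹ ^ 2`.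
  have h1 := hM (‖x‖⁻¹ • x) (by simp [norm_smul, hx'.ne'])
  rw [Matrix.mulVec_smul, smul_dotProduct, dotProduct_smul, smul_eq_mul, smul_eq_mul,
    ← mul_assoc] at h1
  simpa using (mul_pos_iff_of_pos_left (by positivity)).1 h1

/-- The polynomial map `(R, s) ↦ (R, R * s²)`, whose local inverses send `(R, S)` to `R` paired with
a square root of `R⁻¹ * S`. Keeping `R` as a component avoids differentiating matrix inversion. -/
def sqMap (p : Mat × Mat) : Mat × Mat := (p.1, p.1 * (p.2 * p.2))

theorem isBoundedBilinearMap_mul : IsBoundedBilinearMap ℝ fun p : Mat × Mat => p.1 * p.2 :=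
  (LinearMap.mul ℝ Mat).toContinuousBilinearMap.isBoundedBilinearMap

theorem contDiff_sqMap : ContDiff ℝ (⊤ : ℕ∞) (sqMap (n := n)) := by
  have hb := (isBoundedBilinearMap_mul (n := n)).contDiff (n := (⊤ : ℕ∞))
  exact contDiff_fst.prodMk
    (hb.comp (contDiff_fst.prodMk (hb.comp (contDiff_snd.prodMk contDiff_snd))))

/-- The derivative `(ρ, H) ↦ (ρ, R * (s * H + H * s) + ρ * s²)` of `sqMap` at `(R, s)` is injective by
Sylvester's lemma, hence an isomorphism by finite dimensionality. -/
theorem exists_equiv_deriv (hn : 1 ≤ n) {R s : Mat} (hR : R.PosDef) (hs : HasPosEig s) :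
    ∃ L : (Mat × Mat) ≃L[ℝ] (Mat × Mat),
      HasFDerivAt sqMap (L : (Mat × Mat) →L[ℝ] (Mat × Mat)) (R, s) := by
  have hb := isBoundedBilinearMap_mul (n := n)
  have h1 := (hb.hasFDerivAt (s, s)).comp (R, s)
    ((hasFDerivAt_snd (𝕜 := ℝ) (p := (R, s))).prodMk hasFDerivAt_snd)
  have h2 := (hb.hasFDerivAt (R, s * s)).comp (R, s)
    ((hasFDerivAt_fst (𝕜 := ℝ) (p := (R, s))).prodMk h1)
  have h3 := (hasFDerivAt_fst (𝕜 := ℝ) (p := (R, s))).prodMk h2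
  obtain ⟨D, hD, hDv⟩ : ∃ D : (Mat × Mat) →L[ℝ] (Mat × Mat), HasFDerivAt sqMap D (R, s) ∧
      ∀ v, D v = (v.1, R * (s * v.2 + v.2 * s) + v.1 * (s * s)) := ⟨_, h3, fun v => rfl⟩
  have hinj : Function.Injective D := by
    refine (injective_iff_map_eq_zero D).2 ?_
    rintro ⟨ρ, H⟩ h0
    rw [hDv, Prod.mk_eq_zero] at h0
    obtain ⟨h01, h02⟩ := h0
    dsimp only at h01 h02
    subst h01
    rw [zero_mul, add_zero] at h02
    have h03 : s * H + H * s = 0 := by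
      rw [← Matrix.nonsing_inv_mul_cancel_left R (s * H + H * s) (det_isUnit hR), h02, mul_zero]
    rw [sylvester hn hs hs h03]
    rfl
  refine ⟨(LinearEquiv.ofInjectiveEndo (D : (Mat × Mat) →ₗ[ℝ] (Mat × Mat))
    hinj).toContinuousLinearEquiv, ?_⟩
  convert hD using 1
  exact ContinuousLinearMap.ext fun v => rfl

/-- Any choice `f` of square roots agrees, on positive definite pairs near `(R₀, S₀)`, with the smooth
local inverse of `sqMap` supplied by the inverse function theorem. -/
theorem contDiffWithinAt (hn : 1 ≤ n) (f : Mat × Mat → Mat)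
    (hf : ∀ R S : Mat, R.PosDef → S.PosDef →
      HasPosEig (f (R, S)) ∧ f (R, S) * f (R, S) = R⁻¹ * S)
    {R₀ S₀ : Mat} (hR₀ : R₀.PosDef) (hS₀ : S₀.PosDef) :
    ContDiffWithinAt ℝ (⊤ : ℕ∞) f {p | p.1.PosDef ∧ p.2.PosDef} (R₀, S₀) := by
  obtain ⟨hs, hsq⟩ := hf R₀ S₀ hR₀ hS₀
  set s₀ := f (R₀, S₀) with hs₀
  obtain ⟨L, hL⟩ := exists_equiv_deriv hn hR₀ hs
  have hF : ContDiffAt ℝ (⊤ : ℕ∞) (sqMap (n := n)) (R₀, s₀) := contDiff_sqMap.contDiffAt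
  have htop : ((⊤ : ℕ∞) : WithTop ℕ∞) ≠ 0 := by simp
  have hval : sqMap (R₀, s₀) = (R₀, S₀) := by
    rw [sqMap, hsq, Matrix.mul_nonsing_inv_cancel_left _ _ (det_isUnit hR₀)]
  let Φ := hF.toOpenPartialHomeomorph sqMap hL htop
  have hΦ : ∀ p, Φ p = sqMap p := fun _ => rfl
  have hsrc : (R₀, s₀) ∈ Φ.source := hF.mem_toOpenPartialHomeomorph_source hL htop
  have htgt : (R₀, S₀) ∈ Φ.target := hval ▸ hF.image_mem_toOpenPartialHomeomorph_target hL htop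
  have hsymm : Φ.symm (R₀, S₀) = (R₀, s₀) := by
    rw [← hval, ← hΦ]; exact Φ.left_inv hsrc
  have hG : ContDiffAt ℝ (⊤ : ℕ∞) (fun p => (Φ.symm p).2) (R₀, S₀) := by
    have : ContDiffAt ℝ (⊤ : ℕ∞) Φ.symm (R₀, S₀) :=
      Φ.contDiffAt_symm htgt (by rw [hsymm]; exact hL) (by rw [hsymm]; exact hF)
    exact contDiffAt_snd.comp _ this
  have hcont : Filter.Tendsto Φ.symm (nhds (R₀, S₀)) (nhds (R₀, s₀)) := by
    have := Φ.symm.continuousAt htgt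
    rwa [ContinuousAt, hsymm] at this
  have hinv : ContinuousAt (fun R : Mat => R⁻¹) R₀ := by
    have h1 : ContinuousAt (fun R : Mat => (R.det)⁻¹ • R.adjugate) R₀ :=
      ((continuous_id.matrix_det.continuousAt).inv₀ hR₀.det_pos.ne').smul
        continuous_id.matrix_adjugate.continuousAt
    refine h1.congr (Filter.Eventually.of_forall fun R => ?_)
    simp [Matrix.inv_def]
  have htwist : ContinuousAt (fun q : Mat × Mat => (q.1, q.1⁻¹ * q.2ᵀ * q.1)) (R₀, s₀) := by
    have h1 : ContinuousAt (fun q : Mat × Mat => q.1⁻¹) (R₀, s₀) :=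
      ContinuousAt.comp (g := fun R : Mat => R⁻¹) (f := Prod.fst) hinv continuousAt_fst
    exact continuousAt_fst.prodMk
      ((h1.mul (continuous_snd.matrix_transpose.continuousAt)).mul continuousAt_fst)
  have E1 : ∀ᶠ q in nhds (R₀, s₀), (q.1, q.1⁻¹ * q.2ᵀ * q.1) ∈ Φ.source := by
    refine htwist.eventually (Φ.open_source.mem_nhds ?_)
    dsimp only
    rw [twist_eq hn hR₀ hS₀ hs hsq]
    exact hsrc
  have E2 : ∀ᶠ q : Mat × Mat in nhds (R₀, s₀), (q.1 * q.2).IsHermitian → (q.1 * q.2).PosDef := by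
    have hc : ContinuousAt (fun q : Mat × Mat => q.1 * q.2) (R₀, s₀) :=
      continuousAt_fst.mul continuousAt_snd
    exact hc.eventually (eventually_pos (posDef_mul hn hR₀ hS₀ hs hsq))
  have E3 : ∀ᶠ p in nhds (R₀, S₀), p ∈ Φ.target := Φ.open_target.mem_nhds htgt
  refine hG.contDiffWithinAt.congr_of_eventuallyEq_of_mem ?_ ⟨hR₀, hS₀⟩
  filter_upwards [nhdsWithin_le_nhds E3, nhdsWithin_le_nhds (hcont.eventually E1),
    nhdsWithin_le_nhds (hcont.eventually E2), self_mem_nhdsWithin] with p h3 h1 h2 hp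
  obtain ⟨R, S⟩ := p
  obtain ⟨hR, hS⟩ : R.PosDef ∧ S.PosDef := hp
  have hq : sqMap (Φ.symm (R, S)) = (R, S) := Φ.right_inv h3
  have hqs : Φ.symm (R, S) ∈ Φ.source := Φ.map_target h3
  generalize Φ.symm (R, S) = q at *
  obtain ⟨R', t⟩ := q
  obtain ⟨rfl, ht⟩ := Prod.mk.inj hq
  dsimp only at *
  have hu := det_isUnit hR
  have htt : t * t = R'⁻¹ * S := by
    rw [← ht, Matrix.nonsing_inv_mul_cancel_left _ _ hu]
  -- `sqMap` is injective on the source and takes the same value at `t` and at its twist.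
  have htw : R'⁻¹ * tᵀ * R' = t := by
    have : sqMap (R', R'⁻¹ * tᵀ * R') = sqMap (R', t) := by
      rw [sqMap, sqMap, twist_sq hR hS htt, htt]
    exact (Prod.mk.inj (Φ.injOn h1 hqs this)).2
  have hpd : (R' * t).PosDef := h2 (by
    rw [Matrix.IsHermitian, Matrix.conjTranspose_eq_transpose_of_trivial]
    exact symm_of_twist hR htw)
  have hte : HasPosEig t := by
    have := hasPosEig_inv_mul hR hpd
    rwa [Matrix.nonsing_inv_mul_cancel_left _ _ hu] at this
  exact sqrt_unique hn (hf _ _ hR hS).1 hte ((hf _ _ hR hS).2.trans htt.symm)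

end MatrixSqrt

/-- Fix `n ≥ 1`. For every pair `(R, S)` of real symmetric positive definite
`n×n` matrices there is a unique real `n×n` matrix `s(R,S)` all of whose complex eigenvalues
(roots of the characteristic polynomial of the complexification) are positive real numbers
and which satisfies `s(R,S)² = R⁻¹ * S`; moreover `R * s(R,S)` is symmetric, and the
assignment `(R,S) ↦ s(R,S)` is infinitely differentiable (`C^∞`) on the set of pairs of
symmetric positive definite matrices: any function on pairs of `n×n` real matrices which on
that set produces the matrix with those two characterizing properties is `ContDiffOn ℝ ⊤`
there. -/
theorem stmt_6 (n : ℕ) (hn : 1 ≤ n) :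
    (∀ R S : Matrix (Fin n) (Fin n) ℝ, R.PosDef → S.PosDef →
      (∃! s : Matrix (Fin n) (Fin n) ℝ,
        (∀ μ : ℂ, ((s.map (algebraMap ℝ ℂ)).charpoly).IsRoot μ →
          ∃ r : ℝ, 0 < r ∧ μ = (r : ℂ)) ∧
        s * s = R⁻¹ * S) ∧
      (∀ s : Matrix (Fin n) (Fin n) ℝ,
        ((∀ μ : ℂ, ((s.map (algebraMap ℝ ℂ)).charpoly).IsRoot μ →
          ∃ r : ℝ, 0 < r ∧ μ = (r : ℂ)) ∧
         s * s = R⁻¹ * S) →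
        (R * s)ᵀ = R * s)) ∧
    (∀ f : Matrix (Fin n) (Fin n) ℝ × Matrix (Fin n) (Fin n) ℝ → Matrix (Fin n) (Fin n) ℝ,
      (∀ R S : Matrix (Fin n) (Fin n) ℝ, R.PosDef → S.PosDef →
        (∀ μ : ℂ, (((f (R, S)).map (algebraMap ℝ ℂ)).charpoly).IsRoot μ →
          ∃ r : ℝ, 0 < r ∧ μ = (r : ℂ)) ∧
        f (R, S) * f (R, S) = R⁻¹ * S) →
      ContDiffOn ℝ (⊤ : ℕ∞) f
        {p : Matrix (Fin n) (Fin n) ℝ × Matrix (Fin n) (Fin n) ℝ |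
          p.1.PosDef ∧ p.2.PosDef}) := by
  refine ⟨fun R S hR hS => ⟨?_, ?_⟩, ?_⟩
  · obtain ⟨P, hP, hPS⟩ := MatrixSqrt.exists_sqrt hR hS
    exact ⟨R⁻¹ * P, ⟨MatrixSqrt.hasPosEig_inv_mul hR hP, hPS⟩,
      fun t ht => MatrixSqrt.sqrt_unique hn ht.1 (MatrixSqrt.hasPosEig_inv_mul hR hP)
        (ht.2.trans hPS.symm)⟩
  · rintro s ⟨hs, hsq⟩
    exact MatrixSqrt.symm_of_twist hR (MatrixSqrt.twist_eq hn hR hS hs hsq)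
  · rintro f hf ⟨R, S⟩ ⟨hR, hS⟩
    exact MatrixSqrt.contDiffWithinAt hn f hf hR hS
end

section
/- Let X, Y, Z be topological spaces with Y Hausdorff and Z weakly locally compact (every point of Z has a compact neighborhood). Let f : X → Y be a continuous bijection and q : Y → Z a continuous map such that the preimage under q ∘ f of every compact subset of Z is compact. Then f is a homeomorphism. -/
/-! A continuous closed bijection is a homeomorphism, so it suffices that `f` is closed, and
closedness of `f '' C` can be tested locally at each point `y` of its closure. A compact
neighborhood `K` of `q y` gives a neighborhood `q ⁻¹' K` of `y`, over which `f '' C` is the image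
of the compact set `C ∩ (q ∘ f) ⁻¹' K`, hence closed because `Y` is Hausdorff. -/

/-- Let `X`, `Y`, `Z` be topological spaces with `Y` Hausdorff and `Z` weakly
locally compact (every point has a compact neighborhood). Let `f : X → Y` be a continuous
bijection and `q : Y → Z` a continuous map such that the preimage under `q ∘ f` of every
compact subset of `Z` is compact. Then `f` is a homeomorphism. -/
theorem stmt_8 {X Y Z : Type*} [TopologicalSpace X] [TopologicalSpace Y] [TopologicalSpace Z]
    [T2Space Y] [WeaklyLocallyCompactSpace Z]
    (f : X → Y) (q : Y → Z)
    (hf : Continuous f) (hbij : Function.Bijective f) (hq : Continuous q)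
    (hcpt : ∀ K : Set Z, IsCompact K → IsCompact ((q ∘ f) ⁻¹' K)) :
    IsHomeomorph f := by
  refine isHomeomorph_iff_continuous_isClosedMap_bijective.2 ⟨hf, fun C hC => ?_, hbij⟩
  refine isClosed_of_closure_subset fun y hy => ?_
  obtain ⟨K, hK, hKy⟩ := exists_compact_mem_nhds (q y)
  -- The part of `f '' C` lying over `K` is the image of a compact set, hence closed in `Y`.
  have hclosed : IsClosed (f '' (C ∩ (q ∘ f) ⁻¹' K)) :=
    (((hcpt K hK).inter_left hC).image hf).isClosed
  -- Since `q ⁻¹' K` is a neighborhood of `y`, this part already has `y` in its closure.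
  have hmem : y ∈ closure (f '' (C ∩ (q ∘ f) ⁻¹' K)) := by
    refine mem_closure_iff_nhds.2 fun t ht => ?_
    obtain ⟨_, ⟨hxt, hxK⟩, x, hxC, rfl⟩ := mem_closure_iff_nhds.1 hy (t ∩ q ⁻¹' K)
      (Filter.inter_mem ht (hq.continuousAt hKy))
    exact ⟨f x, hxt, x, ⟨hxC, hxK⟩, rfl⟩
  rw [hclosed.closure_eq] at hmem
  exact Set.image_mono Set.inter_subset_left hmem
end
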